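/- Let A and B be the companion matrices of f(x) = (x-1)^6 and g(x) = (x+1)^2(x^4+x^3+x^2+x+1) respectively, regarded as elements of GL(6,ℤ). Then the elements t = A⁻¹B and r = A⁻¹BA both have infinite order, the subgroup of GL(6,ℤ) generated by A and B equals the subgroup generated by t and r, and this group is the internal free product of the cyclic subgroups ⟨t⟩ and ⟨r⟩; in particular, the hypergeometric group Γ(α,β) with α = (0,0,0,0,0,0) and β = (1/2,1/2,1/5,2/5,3/5,4/5) is isomorphic to ℤ * ℤ, a free group of rank 2. -/

import Mathlib

open Matrix

/-- The companion matrix of `f(x) = (x-1)^6 = x^6 - 6x^5 + 15x^4 - 20x^3 + 15x^2 - 6x + 1`. -/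
def companionF : Matrix (Fin 6) (Fin 6) ℤ :=
  !![0,0,0,0,0,-1; 1,0,0,0,0,6; 0,1,0,0,0,-15; 0,0,1,0,0,20; 0,0,0,1,0,-15; 0,0,0,0,1,6]

/-- The companion matrix of `g(x) = (x+1)^2(x^4+x^3+x^2+x+1) = x^6 + 3x^5 + 4x^4 + 4x^3 + 4x^2 + 3x + 1`. -/
def companionG : Matrix (Fin 6) (Fin 6) ℤ :=
  !![0,0,0,0,0,-1; 1,0,0,0,0,-3; 0,1,0,0,0,-4; 0,0,1,0,0,-4; 0,0,0,1,0,-4; 0,0,0,0,1,-3]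

/-!
The element `t = A⁻¹B` is a transvection `x ↦ x + x₅ v`, and `s = -r`, where `r = A⁻¹BA`, has the
property that `s ^ 10 - 1` takes values in the fixed vectors of `s`, so that `s`-orbits are
periodic up to translation. Ping-pong is played on `C ∪ -C` and `P ∪ -P`: here `C` is a polyhedral
cone in the half-space `x₅ ≥ 0`, and `P` consists of the vectors `x` such that `s ^ n x` lies in
`C` for `n > 0` and in `-C` for `n < 0`. By the choice of `P`, nontrivial powers of `r` map
`P ∪ -P` into `C ∪ -C`. Since `t ^ n c` differs from `t c` or from `t⁻¹ c` by a multiple of `v`, the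
powers of `t` play their part once `v`, `t c` and `-t⁻¹ c` lie in `P` for all `c` in `C`. An
involution that preserves `C` and inverts `s` and `t` reduces the last condition to the second
one, and the periodicity reduces membership in `P` to finitely many memberships in `C`. The two
sets may overlap, but `v` lies in `P` and not in `C ∪ -C`, which is enough, because every
nontrivial word has a conjugate that begins and ends with a power of `r`.
-/

section PingPong

open Monoid CoprodI Cardinal Pointwise

variable {ι G : Type*} [Group G]

theorem exists_neWord_conj {H : ι → Type*} [∀ i, Group (H i)] {i j k : ι} (w : NeWord H i j)
    (hcard : 3 ≤ #(H k)) : ∃ (w' : NeWord H k k) (g : CoprodI H), w'.prod = g * w.prod * g⁻¹ := by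
  have of_head {j : ι} (w : NeWord H k j) (hj : j ≠ k) :
      ∃ (w' : NeWord H k k) (g : CoprodI H), w'.prod = g * w.prod * g⁻¹ := by
    obtain ⟨h, h_ne_one, hne⟩ := exists_ne_ne_of_three_le hcard 1 w.head⁻¹
    have hhead : h * w.head ≠ 1 := by simpa [mul_eq_one_iff_eq_inv] using hne
    exact ⟨.append (w.mulHead h hhead) hj (.singleton h⁻¹ (inv_ne_one.mpr h_ne_one)), of h,
      by simp⟩
  by_cases hi : i = k <;> by_cases hj : j = k
  · subst hi hj
    exact ⟨w, 1, by simp⟩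
  · subst hi
    exact of_head w hj
  · subst hj
    obtain ⟨w', g, hw'⟩ := of_head w.inv hi
    exact ⟨w'.inv, g, by simp [hw', mul_assoc]⟩
  · obtain ⟨h, h_ne_one, -⟩ := exists_ne_ne_of_three_le hcard 1 1
    exact ⟨.append (.append (.singleton h h_ne_one) (Ne.symm hi) w) hj
      (.singleton h⁻¹ (inv_ne_one.mpr h_ne_one)), of h, by simp⟩

variable {α : Type*} [MulAction G α] {X : ι → Set α} {k l : ι}

/- Mathlib's ping-pong lemmas ask for disjoint sets; a single point of `X l` outside `X k` is
enough, since every nontrivial word has a conjugate that begins and ends in `H k`. -/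
theorem coprodI_lift_injective_of_not_subset {H : ι → Type*} [∀ i, Group (H i)]
    (f : ∀ i, H i →* G) (hpp : Pairwise fun i j => ∀ h : H i, h ≠ 1 → f i h • X j ⊆ X i)
    (hcard : 3 ≤ #(H k)) (hkl : k ≠ l) (hX : ¬ X l ⊆ X k) : Function.Injective (lift f) := by
  classical
  rw [injective_iff_map_eq_one, Word.equiv.forall_congr_left]
  intro w hw
  by_contra hne
  obtain ⟨i, j, w, rfl⟩ := NeWord.of_word w fun h => hne (by simp [h, Word.equiv])
  obtain ⟨w', g, hw'⟩ := exists_neWord_conj w hcard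
  have hlift : lift f w'.prod = 1 := by
    have : lift f w.prod = 1 := hw
    simp [hw', this]
  exact hX (by simpa [hlift] using lift_word_ping_pong f X hpp w' hkl)

theorem freeGroup_lift_injective_of_not_subset (a : ι → G)
    (hpp : Pairwise fun i j => ∀ n : ℤ, n ≠ 0 → ∀ x ∈ X j, a i ^ n • x ∈ X i)
    (hkl : k ≠ l) (hX : ¬ X l ⊆ X k) : Function.Injective (FreeGroup.lift a) := by
  have hcomp : FreeGroup.lift a =
      (CoprodI.lift fun i => FreeGroup.lift fun _ : Unit => a i).comp
        freeGroupEquivCoprodI.toMonoidHom := by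
    ext i
    simp
  rw [hcomp, MonoidHom.coe_comp]
  refine (coprodI_lift_injective_of_not_subset _ (fun i j hij h hne => ?_) ?_ hkl hX).comp
    freeGroupEquivCoprodI.injective
  · obtain ⟨n, rfl⟩ := FreeGroup.freeGroupUnitEquivInt.symm.surjective h
    have hn : n ≠ 0 := by rintro rfl; exact hne (by simp [FreeGroup.freeGroupUnitEquivInt])
    simpa [FreeGroup.freeGroupUnitEquivInt] using Set.smul_set_subset_iff.mpr (hpp hij n hn)
  · have : Infinite (FreeGroup Unit) :=
      FreeGroup.freeGroupUnitEquivInt.symm.infinite_iff.mp inferInstance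
    exact ofNat_lt_aleph0.le.trans (infinite_iff.mp this)

end PingPong

section TwoGenerators

variable {G : Type*} [Group G]

theorem closure_pair_eq_closure_inv_mul (a b : G) :
    Subgroup.closure {a, b} = Subgroup.closure {a⁻¹ * b, a⁻¹ * b * a} := by
  apply le_antisymm <;> rw [Subgroup.closure_le, Set.pair_subset_iff]
  · set K := Subgroup.closure {a⁻¹ * b, a⁻¹ * b * a}
    have ht : a⁻¹ * b ∈ K := Subgroup.subset_closure (by simp)
    have hr : a⁻¹ * b * a ∈ K := Subgroup.subset_closure (by simp)
    have ha : a ∈ K := (K.mul_mem_cancel_left ht).mp hr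
    exact ⟨ha, (K.mul_mem_cancel_left (K.inv_mem ha)).mp ht⟩
  · have ha : a ∈ Subgroup.closure {a, b} := Subgroup.subset_closure (by simp)
    have hb : b ∈ Subgroup.closure {a, b} := Subgroup.subset_closure (by simp)
    have ht := mul_mem (inv_mem ha) hb
    exact ⟨ht, mul_mem ht ha⟩

theorem not_isOfFinOrder_of_freeGroup_lift_injective {ι : Type*} {a : ι → G}
    (ha : Function.Injective (FreeGroup.lift a)) (i : ι) : ¬ IsOfFinOrder (a i) := by
  rw [← FreeGroup.lift_apply_of (f := a), ha.isOfFinOrder_iff]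
  exact not_isOfFinOrder_of_isMulTorsionFree (FreeGroup.of_ne_one i)

theorem coprod_lift_zpowers_injective {a b : G}
    (hab : Function.Injective (FreeGroup.lift ![a, b])) :
    Function.Injective
      (Monoid.Coprod.lift (Subgroup.zpowers a).subtype (Subgroup.zpowers b).subtype) := by
  let a' : Subgroup.zpowers a := ⟨a, Subgroup.mem_zpowers a⟩
  let b' : Subgroup.zpowers b := ⟨b, Subgroup.mem_zpowers b⟩
  let inl : _ →* Monoid.Coprod (Subgroup.zpowers a) (Subgroup.zpowers b) := Monoid.Coprod.inl
  let inr : _ →* Monoid.Coprod (Subgroup.zpowers a) (Subgroup.zpowers b) := Monoid.Coprod.inr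
  let ψ : FreeGroup (Fin 2) →* Monoid.Coprod (Subgroup.zpowers a) (Subgroup.zpowers b) :=
    FreeGroup.lift ![inl a', inr b']
  have hψ : Function.Surjective ψ := by
    rw [← MonoidHom.range_eq_top, eq_top_iff, ← Monoid.Coprod.range_inl_sup_range_inr, sup_le_iff]
    constructor
    · rintro _ ⟨⟨_, n, rfl⟩, rfl⟩
      exact ⟨FreeGroup.of 0 ^ n, (map_zpow ψ _ n).trans (map_zpow inl a' n).symm⟩
    · rintro _ ⟨⟨_, n, rfl⟩, rfl⟩
      exact ⟨FreeGroup.of 1 ^ n, (map_zpow ψ _ n).trans (map_zpow inr b' n).symm⟩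
  have hcomp : FreeGroup.lift ![a, b] =
      (Monoid.Coprod.lift (Subgroup.zpowers a).subtype (Subgroup.zpowers b).subtype).comp ψ := by
    ext i
    fin_cases i <;> simp [ψ, inl, inr, a', b']
  rw [hcomp, MonoidHom.coe_comp] at hab
  exact hab.of_comp_right hψ

theorem range_coprod_lift_zpowers (a b : G) :
    (Monoid.Coprod.lift (Subgroup.zpowers a).subtype (Subgroup.zpowers b).subtype).range =
      Subgroup.closure {a, b} := by
  rw [Monoid.Coprod.range_lift, Subgroup.range_subtype, Subgroup.range_subtype,
    Subgroup.zpowers_eq_closure, Subgroup.zpowers_eq_closure, ← Subgroup.closure_union,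
    Set.singleton_union]

theorem nonempty_closure_range_mulEquiv_freeGroup {ι : Type*} {a : ι → G}
    (ha : Function.Injective (FreeGroup.lift a)) :
    Nonempty (Subgroup.closure (Set.range a) ≃* FreeGroup ι) := by
  rw [← FreeGroup.range_lift_eq_closure]
  exact ⟨(MonoidHom.ofInjective ha).symm⟩

end TwoGenerators

section BidualCone

variable {R M N : Type*} [CommRing R] [LinearOrder R] [IsStrictOrderedRing R]
  [AddCommGroup M] [Module R M] [AddCommGroup N] [Module R N]

variable (R) in
/-- The double dual of a set of vectors: all vectors on which every linear functional that is
nonnegative on the set is nonnegative. Over `ℤ` this is the saturation of the cone spanned by the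
set, so that no passage to rational coefficients is needed. -/
def bidualCone (s : Set M) : PointedCone R M :=
  .dual .id (PointedCone.dual (Module.Dual.eval R M) s)

variable {s : Set M}

theorem mem_bidualCone {x : M} :
    x ∈ bidualCone R s ↔ ∀ ℓ : Module.Dual R M, (∀ y ∈ s, 0 ≤ ℓ y) → 0 ≤ ℓ x :=
  Iff.rfl

theorem subset_bidualCone : s ⊆ bidualCone R s :=
  fun _ hx _ hℓ => hℓ hx

theorem mem_bidualCone_of_smul_mem {a : R} {x : M} (ha : 0 < a) (h : a • x ∈ bidualCone R s) :
    x ∈ bidualCone R s := fun ℓ hℓ => by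
  have : 0 ≤ a * ℓ x := by simpa using mem_bidualCone.mp h ℓ hℓ
  exact nonneg_of_mul_nonneg_right this ha

theorem map_mem_bidualCone {t : Set N} (f : M →ₗ[R] N) (hf : ∀ y ∈ s, f y ∈ bidualCone R t)
    {x : M} (hx : x ∈ bidualCone R s) : f x ∈ bidualCone R t :=
  fun ℓ hℓ => hx (x := ℓ.comp f) fun y hy => hf y hy hℓ

theorem mulVec_mem_bidualCone {ι m n : Type*} [Fintype n] {a : ι → n → R} {t : Set (m → R)}
    (M : Matrix m n R) (hM : ∀ k, M *ᵥ a k ∈ bidualCone R t) {x : n → R}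
    (hx : x ∈ bidualCone R (Set.range a)) : M *ᵥ x ∈ bidualCone R t :=
  map_mem_bidualCone M.mulVecLin (Set.forall_mem_range.mpr hM) hx

end BidualCone

section Cone

variable {G V : Type*} [Group G] [AddCommGroup V] [DistribMulAction G V]
  {C P : AddSubmonoid V} {e g r s t : G} {u v x : V}

theorem zpow_smul_eq_add_zsmul (hx : g • x = x + u) (hu : g • u = u) (n : ℤ) :
    g ^ n • x = x + n • u := by
  have hx' : g⁻¹ • x = x - u := by
    rw [inv_smul_eq_iff, smul_sub, hx, hu, add_sub_cancel_right]
  have hun (m : ℤ) : g ^ m • u = u := (MulAction.stabilizer G u).zpow_mem hu m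
  induction n with
  | zero => simp
  | succ n ih =>
    rw [_root_.zpow_add_one, mul_smul, hx, smul_add, ih, hun, add_zsmul, one_zsmul, add_assoc]
  | pred n ih =>
    rw [_root_.zpow_sub_one, mul_smul, hx', smul_sub, ih, hun, sub_zsmul, one_zsmul, add_sub_assoc,
      sub_eq_add_neg]

theorem zpow_smul_eq_or_eq_neg (hrs : ∀ x : V, r • x = -(s • x)) (n : ℤ) (x : V) :
    r ^ n • x = s ^ n • x ∨ r ^ n • x = -(s ^ n • x) := by
  have hrs' (y : V) : r⁻¹ • y = -(s⁻¹ • y) := by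
    rw [inv_smul_eq_iff, hrs, smul_neg, smul_inv_smul, neg_neg]
  induction n generalizing x with
  | zero => simp
  | succ n ih =>
    rw [_root_.zpow_add_one, _root_.zpow_add_one, mul_smul, mul_smul, hrs, smul_neg, neg_inj,
      neg_eq_iff_eq_neg]
    exact (ih (s • x)).symm
  | pred n ih =>
    rw [_root_.zpow_sub_one, _root_.zpow_sub_one, mul_smul, mul_smul, hrs', smul_neg, neg_inj,
      neg_eq_iff_eq_neg]
    exact (ih (s⁻¹ • x)).symm

/-- The vectors whose forward `s`-orbit lies in `C` and whose backward `s`-orbit lies in `-C`,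
the vector itself being exempt. These are the vectors that a nontrivial power of `s` throws
into `C ∪ -C`. -/
def separatedOrbits (C : AddSubmonoid V) (s : G) : AddSubmonoid V where
  carrier := {x | ∀ n : ℤ, 0 < n → s ^ n • x ∈ C ∧ -(s ^ (-n) • x) ∈ C}
  zero_mem' := by simp
  add_mem' {x y} hx hy n hn := by
    rw [smul_add, smul_add, neg_add]
    exact ⟨C.add_mem (hx n hn).1 (hy n hn).1, C.add_mem (hx n hn).2 (hy n hn).2⟩

theorem zpow_add_mul_smul_of_period {N : ℕ} (hx : s ^ N • x = x + u) (hu : s • u = u) (i : ℕ)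
    (q : ℤ) : s ^ (i + N * q : ℤ) • x = s ^ i • x + q • u := by
  have hun (m : ℕ) : s ^ m • u = u := (MulAction.stabilizer G u).pow_mem hu m
  rw [_root_.zpow_add, _root_.zpow_mul, mul_smul, zpow_natCast, zpow_natCast,
    zpow_smul_eq_add_zsmul hx (hun N), smul_add, smul_comm, hun]

/- In the order defined by `C`, the hypotheses on one period read `0 ≤ s ^ i • x ≤ u`. -/
theorem mem_separatedOrbits_of_period {N : ℕ} (hN : 0 < N) (hx : s ^ N • x = x + u)
    (hu : s • u = u) (huC : u ∈ C) (hpos : ∀ i < N, s ^ (i + 1) • x ∈ C)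
    (hneg : ∀ i < N, u - s ^ i • x ∈ C) : x ∈ separatedOrbits C s := by
  have hdiv (m : ℤ) : ∃ i < N, ∃ q : ℤ, m = i + N * q := by
    have hN' : (0 : ℤ) < N := by exact_mod_cast hN
    have := Int.emod_nonneg m hN'.ne'
    have := Int.emod_lt_of_pos m hN'
    exact ⟨(m % N).toNat, by omega, m / N, by rw [Int.toNat_of_nonneg ‹_›, Int.emod_add_mul_ediv]⟩
  have hzsmul {q : ℤ} (hq : 0 ≤ q) : q • u ∈ C := by
    lift q to ℕ using hq
    simpa using C.nsmul_mem huC q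
  intro n hn
  constructor
  · obtain ⟨i, hi, q, hq⟩ := hdiv (n - 1)
    have hq_nonneg : 0 ≤ q := by
      by_contra! h
      nlinarith
    obtain rfl : n = (i + 1 : ℕ) + N * q := by push_cast; linarith
    rw [zpow_add_mul_smul_of_period hx hu]
    exact C.add_mem (hpos i hi) (hzsmul hq_nonneg)
  · obtain ⟨i, hi, q, hq⟩ := hdiv (-n)
    have hq_neg : q < 0 := by
      by_contra! h
      have : 0 ≤ N * q := by positivity
      omega
    have hsplit : -(s ^ i • x + q • u) = u - s ^ i • x + (-q - 1) • u := by
      rw [sub_zsmul, neg_zsmul, one_zsmul]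
      abel
    rw [hq, zpow_add_mul_smul_of_period hx hu, hsplit]
    exact C.add_mem (hneg i hi) (hzsmul (by omega))

theorem neg_smul_mem_separatedOrbits (hes : e * s * e⁻¹ = s⁻¹) (he : ∀ c ∈ C, e • c ∈ C)
    (hx : x ∈ separatedOrbits C s) : -(e • x) ∈ separatedOrbits C s := by
  have hcomm (n : ℤ) : s ^ (-n) • e • x = e • s ^ n • x := by
    have : s ^ (-n) * e = e * s ^ n := by
      rw [← _root_.inv_zpow', ← hes, conj_zpow, inv_mul_cancel_right]
    rw [← mul_smul, this, mul_smul]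
  intro n hn
  have hpos : s ^ n • e • x = e • s ^ (-n) • x := by simpa using hcomm (-n)
  rw [smul_neg, smul_neg, neg_neg, hcomm, hpos, ← smul_neg]
  exact ⟨he _ (hx n hn).2, he _ (hx n hn).1⟩

theorem zpow_smul_mem_or_neg_mem (htv : t • v = v) (hvP : v ∈ P) {c : V} {k : ℕ}
    (hk : t • c = c + k • v) (htc : t • c ∈ P) (htc' : -(t⁻¹ • c) ∈ P) {n : ℤ} (hn : n ≠ 0) :
    t ^ n • c ∈ P ∨ -(t ^ n • c) ∈ P := by
  have hu : t • k • v = k • v := by rw [smul_comm, htv]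
  have hpow {y : V} (hy : t • y = y + k • v) (m : ℤ) : t ^ m • y = y + m • k • v :=
    zpow_smul_eq_add_zsmul hy hu m
  have hkv (m : ℕ) : m • k • v ∈ P := P.nsmul_mem (P.nsmul_mem hvP k) m
  obtain ⟨m, rfl | rfl⟩ : ∃ m : ℕ, n = m + 1 ∨ n = -m - 1 := by
    rcases hn.lt_or_gt with h | h
    exacts [⟨(-n - 1).toNat, by omega⟩, ⟨(n - 1).toNat, by omega⟩]
  · have htc₂ : t • t • c = t • c + k • v := by
      nth_rw 1 [hk, smul_add, hu]
    rw [_root_.zpow_add_one, mul_smul, hpow htc₂, natCast_zsmul]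
    exact .inl (P.add_mem htc (hkv m))
  · have hc : t • t⁻¹ • c = t⁻¹ • c + k • v := by
      rw [smul_inv_smul, ← smul_left_cancel_iff t, smul_add, smul_inv_smul, hu, hk]
    rw [_root_.zpow_sub_one, mul_smul, hpow hc, neg_zsmul, natCast_zsmul, neg_add, neg_neg]
    exact .inr (P.add_mem htc' (hkv m))

theorem freeGroup_lift_injective_of_separatedOrbits (hrs : ∀ x : V, r • x = -(s • x))
    (htv : t • v = v) (htC : ∀ c ∈ C, ∃ k : ℕ, t • c = c + k • v)
    (hv : v ∈ separatedOrbits C s) (ht : ∀ c ∈ C, t • c ∈ separatedOrbits C s)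
    (ht' : ∀ c ∈ C, -(t⁻¹ • c) ∈ separatedOrbits C s) (hvC : v ∉ C) (hvC' : -v ∉ C) :
    Function.Injective (FreeGroup.lift ![t, r]) := by
  let X : Fin 2 → Set V :=
    ![{x | x ∈ separatedOrbits C s ∨ -x ∈ separatedOrbits C s}, {x | x ∈ C ∨ -x ∈ C}]
  have htX (n : ℤ) (hn : n ≠ 0) : ∀ x ∈ X 1, t ^ n • x ∈ X 0 := by
    have key (c) (hc : c ∈ C) : t ^ n • c ∈ X 0 :=
      have ⟨_, hk⟩ := htC c hc
      zpow_smul_mem_or_neg_mem htv hv hk (ht c hc) (ht' c hc) hn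
    rintro x (hx | hx)
    · exact key x hx
    · simpa [X, or_comm] using key (-x) hx
  have hrX (n : ℤ) (hn : n ≠ 0) : ∀ x ∈ X 0, r ^ n • x ∈ X 1 := by
    have key (p) (hp : p ∈ separatedOrbits C s) : r ^ n • p ∈ X 1 := by
      have hs : s ^ n • p ∈ X 1 := by
        rcases hn.lt_or_gt with hneg | hpos
        · exact .inr (by simpa using (hp (-n) (by omega)).2)
        · exact .inl (hp n hpos).1
      rcases zpow_smul_eq_or_eq_neg hrs n p with h | h <;> rw [h]
      · exact hs
      · simpa [X, or_comm] using hs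
    rintro x (hx | hx)
    · exact key x hx
    · simpa [X, or_comm] using key (-x) hx
  refine freeGroup_lift_injective_of_not_subset (X := X) (k := 1) (l := 0) _ ?_ (by decide)
    fun h => (h (Or.inl hv)).elim hvC hvC'
  intro i j hij n hn
  fin_cases i <;> fin_cases j
  · exact absurd rfl hij
  · exact htX n hn
  · exact hrX n hn
  · exact absurd rfl hij

end Cone

namespace HypergeometricGroup

/-- The direction `v` of the transvection `t x = x + x₅ v`. -/
def axis : Fin 6 → ℤ := ![-9, 11, -24, 11, -9, 0]

/-- The rays of the ping-pong cone. The involution `matE` exchanges `ray k` and `ray (k + 7)`. -/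
def ray : Fin 14 → Fin 6 → ℤ :=
  ![![-3, 14, -26, 24, -11, 2],
    ![-1, 5, -10, 10, -5, 1],
    ![-19, 27, -59, 35, -26, 2],
    ![-3, 11, -17, 14, -6, 1],
    ![-55, 168, -238, 185, -72, 12],
    ![-50, 167, -252, 194, -71, 12],
    ![-86, 84, -131, 28, -21, 6],
    ![-19, 28, -62, 38, -27, 2],
    ![-10, 16, -34, 21, -14, 1],
    ![-4, 17, -29, 25, -11, 2],
    ![-9, 12, -27, 15, -12, 1],
    ![-108, 127, -290, 144, -125, 12],
    ![-109, 118, -276, 145, -130, 12],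
    ![-69, 128, -133, 72, -4, 6]]

/-- The rays of seven simplicial subcones of the ping-pong cone, as indices into `ray`. These
chambers contain all the vectors whose membership in the cone has to be certified. -/
def chamberRay : Fin 7 → Fin 6 → Fin 14 :=
  ![![2, 3, 4, 7, 8, 13],
    ![0, 2, 3, 5, 9, 13],
    ![0, 2, 3, 4, 5, 13],
    ![1, 2, 4, 6, 8, 13],
    ![0, 3, 6, 8, 11, 12],
    ![0, 4, 6, 8, 12, 13],
    ![0, 1, 4, 6, 7, 13]]

/-- The positive factors that make the inverses of the ray matrices of the chambers integral. -/
def chamberDen : Fin 7 → ℤ :=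
  ![16220, 73880, 571000, 1646460, 1878980, 15760800, 882360]

/-- The coordinates with respect to the rays of a chamber, multiplied by `chamberDen`. -/
def chamberCoord : Fin 7 → Matrix (Fin 6) (Fin 6) ℤ :=
  ![!![14005, 10945, -4915, -17355, -10155, 20105;
      13171, -14789, -22949, -11309, 20131, 107391;
      -952, 1548, 2208, 1028, -1992, -8692;
      -29506, -12506, 17934, 29374, 5594, -23746;
      30191, 2311, -26849, -24849, 8311, 6471;
      -156, -496, -456, -36, 764, 2324],
    !![-76555, -33075, 46565, 88485, 20365, -190835;
      -1847, -1847, -1847, -1847, -1847, -1847;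
      -22870, 80410, 98170, 30410, -99590, -233630;
      -640, -3080, -1840, 3080, 4320, -16520;
      98057, 13497, -84023, -120623, 3497, 427017;
      -1460, -100, 420, 100, 620, 6180],
    !![-346293, -221853, 149627, 382027, 166147, -406333;
      -14275, -14275, -14275, -14275, -14275, -14275;
      1674806, 876326, -827834, -2042634, -703674, 6257486;
      -98057, -13497, 84023, 120623, -3497, -427017;
      16555, -20845, -32645, -2645, 34155, -34045;
      4059, 1339, -9901, -18101, 5339, 114579],
    !![-732093, -686853, 168747, 762147, 557067, 1199967;
      -298377, 559683, 676863, -65097, -902097, -187677;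
      145604, 81864, -53636, -121056, -50476, 158104;
      89609, 729, -81791, -85911, 24389, 249109;
      -23223, -1206063, -945303, 563337, 1575537, -1201623;
      -155472, -35532, 92868, 128808, 21828, -228072],
    !![-218240, -661340, -248620, 343680, 606660, 1221920;
      530429, 1416629, 591189, -593411, -1119371, -470911;
      -47487, -30727, -4187, 32353, 59553, 28733;
      -337483, -468523, -164803, 491237, 547637, -2251843;
      156977, 15117, -108623, -133143, -13583, 240557;
      -112939, 31461, 116621, 68201, -69659, -75099],
    !![-3430581, -4408701, -71181, 4103979, 4210899, 6582279;
      1403695, 1057495, -324105, -1287505, -846505, 1283995;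
      1001797, 59437, -876003, -935323, 235037, 2215177;
      -1447386, -4558506, -2874186, 3027174, 5072694, -16052226;
      -445953, 284487, 611847, 149727, -605913, 164427;
      -1532523, -514083, 803277, 1338357, 420717, -2003943],
    !![151833, -619647, -611847, 185433, 900033, -222567;
      -598818, 688902, 1093662, 58782, -1207698, 1149342;
      65360, 67640, 0, -67640, -65360, 76760;
      41495, 12635, -29025, -47465, -6665, 129395;
      -146544, -59964, 65016, 120336, -2064, -410244;
      -74175, -36195, 29025, 71025, 39345, -116475]]

/-- The matrix of `t = A⁻¹B`. -/
def matT : Matrix (Fin 6) (Fin 6) ℤ :=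
  !![1, 0, 0, 0, 0, -9;
     0, 1, 0, 0, 0, 11;
     0, 0, 1, 0, 0, -24;
     0, 0, 0, 1, 0, 11;
     0, 0, 0, 0, 1, -9;
     0, 0, 0, 0, 0, 1]

/-- The matrix of `s = -r`, where `r = A⁻¹BA`. -/
def matS : Matrix (Fin 6) (Fin 6) ℤ :=
  !![0, 0, 0, 0, 9, 55;
     -1, 0, 0, 0, -11, -72;
     0, -1, 0, 0, 24, 159;
     0, 0, -1, 0, -11, -86;
     0, 0, 0, -1, 9, 69;
     0, 0, 0, 0, -1, -6]

/-- An involution that conjugates `t` and `s` to their inverses. -/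
def matE : Matrix (Fin 6) (Fin 6) ℤ :=
  !![0, 0, 0, 0, -1, -15;
     0, 0, 0, -1, 0, 26;
     0, 0, -1, 0, 0, -44;
     0, -1, 0, 0, 0, 26;
     -1, 0, 0, 0, 0, -15;
     0, 0, 0, 0, 0, 1]

/-- The ping-pong cone `C`. -/
def rayCone : PointedCone ℤ (Fin 6 → ℤ) :=
  bidualCone ℤ (Set.range ray)

/-- Membership in one of the chambers, a decidable sufficient condition for membership in the
ping-pong cone. -/
def InChamber (p : Fin 6 → ℤ) : Prop :=
  ∃ σ, ∀ i, 0 ≤ (chamberCoord σ *ᵥ p) i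

instance : DecidablePred InChamber := fun p =>
  inferInstanceAs (Decidable (∃ σ, ∀ i, 0 ≤ (chamberCoord σ *ᵥ p) i))

theorem chamberRay_mul_chamberCoord :
    ∀ σ, (of fun i j => ray (chamberRay σ j) i) * chamberCoord σ = chamberDen σ • 1 := by
  decide +kernel

theorem InChamber.mem_rayCone {p : Fin 6 → ℤ} (hp : InChamber p) : p ∈ rayCone := by
  obtain ⟨σ, hσ⟩ := hp
  have hden : 0 < chamberDen σ := (by decide : ∀ σ, 0 < chamberDen σ) σ
  have hsum : chamberDen σ • p = ∑ j, (chamberCoord σ *ᵥ p) j • ray (chamberRay σ j) := by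
    rw [← one_mulVec (chamberDen σ • p), mulVec_smul, ← smul_mulVec,
      ← chamberRay_mul_chamberCoord, ← mulVec_mulVec, mulVec_eq_sum]
    simp only [op_smul_eq_smul]
    rfl
  refine mem_bidualCone_of_smul_mem hden (hsum ▸ sum_mem fun j _ => ?_)
  exact rayCone.smul_mem (hσ j) (subset_bidualCone (Set.mem_range_self _))

theorem nonneg_of_mem_rayCone (w : Fin 6 → ℤ) (hw : ∀ k, 0 ≤ w ⬝ᵥ ray k) {x : Fin 6 → ℤ}
    (hx : x ∈ rayCone) : 0 ≤ w ⬝ᵥ x :=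
  hx (x := dotProductBilin ℤ ℤ w) (Set.forall_mem_range.mpr hw)

/-- The images under `t` of the rays of the ping-pong cone, together with the direction in which the
powers of `t` move them. -/
def imageRay : Fin 15 → Fin 6 → ℤ :=
  Fin.cons axis fun k => matT *ᵥ ray k

/-- The cone spanned by `axis` and the image of the ping-pong cone under `t`; it contains the images
of the ping-pong cone under all positive powers of `t`. -/
def imageCone : PointedCone ℤ (Fin 6 → ℤ) :=
  bidualCone ℤ (Set.range imageRay)

theorem mulVec_mem_rayCone (M : Matrix (Fin 6) (Fin 6) ℤ)
    (hM : ∀ k, InChamber (M *ᵥ imageRay k)) {x : Fin 6 → ℤ} (hx : x ∈ imageCone) :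
    M *ᵥ x ∈ rayCone :=
  mulVec_mem_bidualCone M (fun k => (hM k).mem_rayCone) hx

theorem inChamber_pow_mulVec : ∀ k, ∀ i < 10, InChamber (matS ^ (i + 1) *ᵥ imageRay k) := by
  decide +kernel

theorem inChamber_period_mulVec : ∀ k, InChamber ((matS ^ 10 - 1) *ᵥ imageRay k) := by
  decide +kernel

theorem inChamber_period_sub_pow_mulVec :
    ∀ k, ∀ i < 10, InChamber ((matS ^ 10 - 1 - matS ^ i) *ᵥ imageRay k) := by
  decide +kernel

theorem matS_mul_period : matS * (matS ^ 10 - 1) = matS ^ 10 - 1 := by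
  decide +kernel

theorem imageCone_le_separatedOrbits {s : GL (Fin 6) ℤ} (hs : s.val = matS) :
    imageCone.toAddSubmonoid ≤ separatedOrbits rayCone.toAddSubmonoid s := by
  intro x hx
  have hpow (n : ℕ) (y : Fin 6 → ℤ) : s ^ n • y = matS ^ n *ᵥ y := by
    rw [Units.smul_def, smul_eq_mulVec, Units.val_pow_eq_pow_val, hs]
  refine mem_separatedOrbits_of_period (N := 10) (u := (matS ^ 10 - 1) *ᵥ x) (by decide) ?_ ?_
    (mulVec_mem_rayCone _ inChamber_period_mulVec hx) (fun i hi => ?_) fun i hi => ?_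
  · rw [hpow, sub_mulVec, one_mulVec, add_sub_cancel]
  · rw [Units.smul_def, smul_eq_mulVec, hs, mulVec_mulVec, matS_mul_period]
  · rw [hpow]
    exact mulVec_mem_rayCone _ (fun k => inChamber_pow_mulVec k i hi) hx
  · rw [hpow, ← sub_mulVec]
    exact mulVec_mem_rayCone _ (fun k => inChamber_period_sub_pow_mulVec k i hi) hx

theorem matT_mulVec (x : Fin 6 → ℤ) : matT *ᵥ x = x + x 5 • axis := by
  ext i
  fin_cases i <;> simp [matT, axis, mulVec, dotProduct, Fin.sum_univ_succ] <;> ring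

/-- The involution `matE` as an element of `GL(6,ℤ)`. -/
def reversal : GL (Fin 6) ℤ where
  val := matE
  inv := matE
  val_inv := by decide +kernel
  inv_val := by decide +kernel

theorem reversal_mul_mul_inv {g : GL (Fin 6) ℤ} (h : matE * g.val * matE * g.val = 1) :
    reversal * g * reversal⁻¹ = g⁻¹ :=
  eq_inv_of_mul_eq_one_left (Units.ext h)

theorem reversal_smul_mem_rayCone {x : Fin 6 → ℤ} (hx : x ∈ rayCone) : reversal • x ∈ rayCone := by
  have hray : ∀ k, matE *ᵥ ray k = ray (k + 7) := by decide +kernel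
  refine mulVec_mem_bidualCone matE (fun k => ?_) hx
  rw [hray]
  exact subset_bidualCone (Set.mem_range_self _)

theorem exists_smul_eq_add_nsmul_axis {t : GL (Fin 6) ℤ} (ht : t.val = matT) {c : Fin 6 → ℤ}
    (hc : c ∈ rayCone) : ∃ k : ℕ, t • c = c + k • axis := by
  have h : 0 ≤ c 5 := by
    simpa using nonneg_of_mem_rayCone (Pi.single 5 1) (by decide +kernel) hc
  refine ⟨(c 5).toNat, ?_⟩
  rw [Units.smul_def, smul_eq_mulVec, ht, matT_mulVec, ← natCast_zsmul, Int.toNat_of_nonneg h]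

theorem axis_notMem_rayCone : axis ∉ rayCone := fun h =>
  absurd (nonneg_of_mem_rayCone ![-1, 0, 1, 1, 0, 4] (by decide +kernel) h) (by decide +kernel)

theorem neg_axis_notMem_rayCone : -axis ∉ rayCone := fun h =>
  have hneg : reversal • -axis = axis := by
    rw [Units.smul_def, smul_eq_mulVec]
    decide +kernel
  axis_notMem_rayCone (hneg ▸ reversal_smul_mem_rayCone h)

theorem smul_mem_imageCone {t : GL (Fin 6) ℤ} (ht : t.val = matT) {c : Fin 6 → ℤ}
    (hc : c ∈ rayCone) : t • c ∈ imageCone := by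
  rw [Units.smul_def, smul_eq_mulVec, ht]
  refine mulVec_mem_bidualCone matT (fun k => ?_) hc
  exact subset_bidualCone ⟨k.succ, Fin.cons_succ ..⟩

theorem freeGroup_lift_injective_of_val_eq {t r : GL (Fin 6) ℤ} (ht : t.val = matT)
    (hr : r.val = -matS) : Function.Injective (FreeGroup.lift ![t, r]) := by
  have hs : (-r).val = matS := by rw [Units.val_neg, hr, neg_neg]
  have hP {x : Fin 6 → ℤ} (hx : x ∈ imageCone) :
      x ∈ separatedOrbits rayCone.toAddSubmonoid (-r) :=
    imageCone_le_separatedOrbits hs hx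
  have het : reversal * t * reversal⁻¹ = t⁻¹ :=
    reversal_mul_mul_inv (by rw [ht]; decide +kernel)
  have hes : reversal * -r * reversal⁻¹ = (-r)⁻¹ :=
    reversal_mul_mul_inv (by rw [hs]; decide +kernel)
  refine freeGroup_lift_injective_of_separatedOrbits (v := axis) (fun x => ?_) ?_
    (fun c hc => exists_smul_eq_add_nsmul_axis ht hc) (hP (subset_bidualCone ⟨0, rfl⟩))
    (fun c hc => hP (smul_mem_imageCone ht hc)) (fun c hc => ?_)
    axis_notMem_rayCone neg_axis_notMem_rayCone
  · rw [Units.smul_def, Units.smul_def, smul_eq_mulVec, smul_eq_mulVec, Units.val_neg,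
      neg_mulVec, neg_neg]
  · simp [Units.smul_def, smul_eq_mulVec, ht, matT_mulVec, axis]
  · have htc := hP (smul_mem_imageCone ht (reversal_smul_mem_rayCone hc))
    have hinv : reversal⁻¹ = reversal := Units.ext rfl
    rw [← het, hinv, mul_smul, mul_smul]
    exact neg_smul_mem_separatedOrbits hes (fun _ => reversal_smul_mem_rayCone) htc

theorem val_inv_mul_eq_matT {A B : GL (Fin 6) ℤ} (hA : A.val = companionF)
    (hB : B.val = companionG) : (A⁻¹ * B).val = matT := by
  have hmul : companionF * matT = companionG := by decide +kernel
  refine A.isUnit.mul_left_cancel ?_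
  rw [← Units.val_mul, mul_inv_cancel_left, hA, hB, hmul]

theorem val_inv_mul_mul_eq_neg_matS {A B : GL (Fin 6) ℤ} (hA : A.val = companionF)
    (hB : B.val = companionG) : (A⁻¹ * B * A).val = -matS := by
  rw [Units.val_mul, val_inv_mul_eq_matT hA hB, hA]
  decide +kernel

end HypergeometricGroup

/-- The hypergeometric group with `α = (0,0,0,0,0,0)`, `β = (1/2,1/2,1/5,2/5,3/5,4/5)` is
free of rank two: `t = A⁻¹B` and `r = A⁻¹BA` have infinite order, generate the group
generated by `A` and `B`, and the group is the internal free product of `⟨t⟩` and `⟨r⟩`;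
in particular it is isomorphic to `ℤ * ℤ`, the free group of rank `2`. -/
theorem hypergeometric_free_of_rank_two
    (A B : GL (Fin 6) ℤ)
    (hA : (A : Matrix (Fin 6) (Fin 6) ℤ) = companionF)
    (hB : (B : Matrix (Fin 6) (Fin 6) ℤ) = companionG) :
    ¬ IsOfFinOrder (A⁻¹ * B) ∧ ¬ IsOfFinOrder (A⁻¹ * B * A) ∧
    Subgroup.closure {A, B} = Subgroup.closure {A⁻¹ * B, A⁻¹ * B * A} ∧
    Function.Injective
      (Monoid.Coprod.lift (Subgroup.zpowers (A⁻¹ * B)).subtype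
        (Subgroup.zpowers (A⁻¹ * B * A)).subtype) ∧
    (Monoid.Coprod.lift (Subgroup.zpowers (A⁻¹ * B)).subtype
        (Subgroup.zpowers (A⁻¹ * B * A)).subtype).range = Subgroup.closure {A, B} ∧
    Nonempty ((Subgroup.closure {A, B} : Subgroup (GL (Fin 6) ℤ)) ≃* FreeGroup (Fin 2)) := by
  have hcl := closure_pair_eq_closure_inv_mul A B
  have hfree : Function.Injective (FreeGroup.lift ![A⁻¹ * B, A⁻¹ * B * A]) :=
    HypergeometricGroup.freeGroup_lift_injective_of_val_eq
      (HypergeometricGroup.val_inv_mul_eq_matT hA hB)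
      (HypergeometricGroup.val_inv_mul_mul_eq_neg_matS hA hB)
  refine ⟨not_isOfFinOrder_of_freeGroup_lift_injective hfree 0,
    not_isOfFinOrder_of_freeGroup_lift_injective hfree 1, hcl,
    coprod_lift_zpowers_injective hfree, (range_coprod_lift_zpowers _ _).trans hcl.symm, ?_⟩
  rw [hcl, ← Matrix.range_cons_cons_empty _ _ ![]]
  exact nonempty_closure_range_mulEquiv_freeGroup hfree
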